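/- arXiv:1204.5510 — 5 statements merged into one kernel-verified Lean document; each statement's English description precedes it below -/
import Mathlib

section
/- Let u_max, ρ_max, β > 0, let U(ρ) = u_max·(1 − ρ/ρ_max) and let p(ρ) = −β·(ρ/ρ_max + log(1 − ρ/ρ_max)) for 0 < ρ < ρ_max. Then for every ρ ∈ (0, ρ_max): (i) p'(ρ) = β·ρ/(ρ_max·(ρ_max − ρ)), and the stability condition p'(ρ)/ρ² > (U'(ρ))² is equivalent to (ρ/ρ_max)·(1 − ρ/ρ_max) < β/(ρ_max·u_max²); (ii) consequently the stability condition fails at ρ if and only if (ρ − ρ_max/2)² ≤ (ρ_max/2)² − β·ρ_max/u_max², so the set of unstable densities is an interval centered at ρ_max/2. -/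
/-!
Clearing the positive denominators of `p'(ρ) / ρ² > U'(ρ)²` turns the stability condition into the
quadratic inequality `u_max² ρ (ρ_max - ρ) < β ρ_max`. Dividing by `(u_max ρ_max)²` gives its
dimensionless form, and completing the square in `ρ (ρ_max - ρ) = (ρ_max/2)² - (ρ - ρ_max/2)²`
describes its negation.
-/

namespace PayneWhitham

/-- The linear desired velocity, with free-flow speed `u_max` and jam density `ρ_max`. -/
noncomputable def linearVelocity (u_max ρ_max ρ : ℝ) : ℝ :=
  u_max * (1 - ρ / ρ_max)

/-- The singular pressure with coefficient `β`, which for `β > 0` blows up as `ρ` tends to the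
jam density `ρ_max`. For `ρ ≥ ρ_max` it only has the junk values of `Real.log`. -/
noncomputable def singularPressure (β ρ_max ρ : ℝ) : ℝ :=
  -β * (ρ / ρ_max + Real.log (1 - ρ / ρ_max))

/-- The criterion for linear stability of the uniform base state of density `ρ` under the desired
velocity `U` and the pressure `p`. -/
def StabilityCondition (U p : ℝ → ℝ) (ρ : ℝ) : Prop :=
  deriv p ρ / ρ ^ 2 > (deriv U ρ) ^ 2

theorem hasDerivAt_one_sub_div (ρ_max ρ : ℝ) :
    HasDerivAt (fun x ↦ 1 - x / ρ_max) (-(1 / ρ_max)) ρ :=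
  ((hasDerivAt_id ρ).div_const ρ_max).const_sub 1

theorem hasDerivAt_linearVelocity (u_max ρ_max ρ : ℝ) :
    HasDerivAt (linearVelocity u_max ρ_max) (-(u_max / ρ_max)) ρ :=
  ((hasDerivAt_one_sub_div ρ_max ρ).const_mul u_max).congr_deriv (by ring)

theorem hasDerivAt_singularPressure {ρ_max ρ : ℝ} (β : ℝ) (hρ_max : ρ_max ≠ 0) (hρ : ρ ≠ ρ_max) :
    HasDerivAt (singularPressure β ρ_max) (β * ρ / (ρ_max * (ρ_max - ρ))) ρ := by
  have gap_ne : ρ_max - ρ ≠ 0 := sub_ne_zero.mpr hρ.symm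
  have one_sub_div_eq : 1 - ρ / ρ_max = (ρ_max - ρ) / ρ_max := one_sub_div hρ_max
  have one_sub_div_ne : 1 - ρ / ρ_max ≠ 0 := one_sub_div_eq ▸ div_ne_zero gap_ne hρ_max
  have hlog := (hasDerivAt_one_sub_div ρ_max ρ).log one_sub_div_ne
  refine ((((hasDerivAt_id ρ).div_const ρ_max).add hlog).const_mul (-β)).congr_deriv ?_
  rw [one_sub_div_eq]
  field_simp
  ring

theorem stabilityCondition_iff {ρ_max ρ : ℝ} (u_max β : ℝ) (hρ : 0 < ρ) (hρ_lt : ρ < ρ_max) :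
    StabilityCondition (linearVelocity u_max ρ_max) (singularPressure β ρ_max) ρ ↔
      u_max ^ 2 * (ρ * (ρ_max - ρ)) < β * ρ_max := by
  have ρ_max_pos : 0 < ρ_max := hρ.trans hρ_lt
  have gap_pos : 0 < ρ_max - ρ := sub_pos.mpr hρ_lt
  have pressure_term : β * ρ / (ρ_max * (ρ_max - ρ)) / ρ ^ 2 =
      β * ρ_max / (ρ_max ^ 2 * (ρ * (ρ_max - ρ))) := by
    field_simp
  have velocity_term : (-(u_max / ρ_max)) ^ 2 =
      u_max ^ 2 * (ρ * (ρ_max - ρ)) / (ρ_max ^ 2 * (ρ * (ρ_max - ρ))) := by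
    field_simp
  rw [StabilityCondition, (hasDerivAt_singularPressure β ρ_max_pos.ne' hρ_lt.ne).deriv,
    (hasDerivAt_linearVelocity u_max ρ_max ρ).deriv, pressure_term, velocity_term, gt_iff_lt,
    div_lt_div_iff_of_pos_right (by positivity)]

theorem div_mul_one_sub_div_lt_iff {u_max ρ_max : ℝ} (β ρ : ℝ) (hu_max : u_max ≠ 0)
    (hρ_max : ρ_max ≠ 0) :
    ρ / ρ_max * (1 - ρ / ρ_max) < β / (ρ_max * u_max ^ 2) ↔
      u_max ^ 2 * (ρ * (ρ_max - ρ)) < β * ρ_max := by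
  have lhs_eq : ρ / ρ_max * (1 - ρ / ρ_max) =
      u_max ^ 2 * (ρ * (ρ_max - ρ)) / (u_max ^ 2 * ρ_max ^ 2) := by
    field_simp
  have rhs_eq : β / (ρ_max * u_max ^ 2) = β * ρ_max / (u_max ^ 2 * ρ_max ^ 2) := by
    field_simp
  rw [lhs_eq, rhs_eq, div_lt_div_iff_of_pos_right (by positivity)]

theorem sq_sub_half_le_iff {u_max : ℝ} (β ρ_max ρ : ℝ) (hu_max : u_max ≠ 0) :
    (ρ - ρ_max / 2) ^ 2 ≤ (ρ_max / 2) ^ 2 - β * ρ_max / u_max ^ 2 ↔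
      β * ρ_max ≤ u_max ^ 2 * (ρ * (ρ_max - ρ)) := by
  have complete_square : (ρ_max / 2) ^ 2 - (ρ - ρ_max / 2) ^ 2 = ρ * (ρ_max - ρ) := by ring
  rw [le_sub_comm, complete_square, div_le_iff₀' (by positivity)]

end PayneWhitham

/-- Payne–Whitham model with linear desired velocity and the singular logarithmic
pressure `p(ρ) = −β·(ρ/ρ_max + log(1 − ρ/ρ_max))` on `(0, ρ_max)`:
(i) `p'(ρ) = β·ρ/(ρ_max·(ρ_max − ρ))` and the stability condition is equivalent
to `(ρ/ρ_max)·(1 − ρ/ρ_max) < β/(ρ_max·u_max²)`;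
(ii) the stability condition fails iff
`(ρ − ρ_max/2)² ≤ (ρ_max/2)² − β·ρ_max/u_max²`, so the unstable densities form
an interval centered at `ρ_max/2`. -/
theorem pw_singular_pressure_stability (u_max ρ_max β : ℝ)
    (hu : 0 < u_max) (hρm : 0 < ρ_max) (hβ : 0 < β)
    (U p : ℝ → ℝ)
    (hU : U = fun ρ => u_max * (1 - ρ / ρ_max))
    (hp : p = fun ρ => -β * (ρ / ρ_max + Real.log (1 - ρ / ρ_max))) :
    ∀ ρ : ℝ, 0 < ρ → ρ < ρ_max →
      (deriv p ρ = β * ρ / (ρ_max * (ρ_max - ρ))) ∧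
      (deriv p ρ / ρ ^ 2 > (deriv U ρ) ^ 2 ↔
        (ρ / ρ_max) * (1 - ρ / ρ_max) < β / (ρ_max * u_max ^ 2)) ∧
      (¬ (deriv p ρ / ρ ^ 2 > (deriv U ρ) ^ 2) ↔
        (ρ - ρ_max / 2) ^ 2 ≤ (ρ_max / 2) ^ 2 - β * ρ_max / u_max ^ 2) := by
  subst hU hp
  intro ρ hρ hρ_lt
  have stable_iff := PayneWhitham.stabilityCondition_iff u_max β hρ hρ_lt
  refine ⟨(PayneWhitham.hasDerivAt_singularPressure β hρm.ne' hρ_lt.ne).deriv, ?_, ?_⟩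
  · exact stable_iff.trans (PayneWhitham.div_mul_one_sub_div_lt_iff β ρ hu.ne' hρm.ne').symm
  · rw [PayneWhitham.sq_sub_half_le_iff β ρ_max ρ hu.ne', ← not_lt]
    exact not_congr stable_iff
end

section
/- Let ρ > 0, set v = 1/ρ, and let Û(w) = U(1/w), p̂(w) = p(1/w). Assume U is differentiable at ρ with U'(ρ) < 0 and p is differentiable at ρ with p'(ρ) > 0, and let m = √(−p̂'(v)). Then the jamiton-existence condition for the Payne–Whitham model, Û'(v) > m, holds if and only if the stability condition fails strictly at ρ, i.e., if and only if p'(ρ)/ρ² < (U'(ρ))². -/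
/-!
Passing to the specific volume `v = 1 / ρ` multiplies derivatives by `-ρ ^ 2`. Hence
`Û'(v) = -ρ ^ 2 * U'(ρ)`, and the Chapman–Jouguet condition `p̂'(v) = -m ^ 2` reads
`m ^ 2 = ρ ^ 2 * p'(ρ)`. Since `m ≥ 0`, the inequality `m < Û'(v)` holds exactly when
`Û'(v) > 0` and `m ^ 2 < Û'(v) ^ 2`; dividing the latter by `ρ ^ 4` gives
`p'(ρ) / ρ ^ 2 < U'(ρ) ^ 2`.
-/

theorem hasDerivAt_comp_one_div {𝕜 F : Type*} [NontriviallyNormedField 𝕜]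
    [NormedAddCommGroup F] [NormedSpace 𝕜 F] {f : 𝕜 → F} {f' : F} {x : 𝕜}
    (hx : x ≠ 0) (hf : HasDerivAt f f' x) :
    HasDerivAt (fun w => f (1 / w)) (-x ^ 2 • f') (1 / x) := by
  have hinv : HasDerivAt (fun w : 𝕜 => 1 / w) (-x ^ 2) (1 / x) := by
    simpa only [one_div, inv_pow, inv_inv] using hasDerivAt_inv (inv_ne_zero hx)
  exact HasDerivAt.scomp (1 / x) (by rwa [one_div_one_div]) hinv

theorem lt_iff_pos_and_pow_lt_pow {M : Type*} [MonoidWithZero M] [LinearOrder M]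
    [PosMulStrictMono M] [MulPosMono M] {a b : M} {n : ℕ} (ha : 0 ≤ a) (hn : n ≠ 0) :
    a < b ↔ 0 < b ∧ a ^ n < b ^ n :=
  ⟨fun hab => ⟨ha.trans_lt hab, pow_lt_pow_left₀ hab ha hn⟩,
    fun ⟨hb, hpow⟩ => lt_of_pow_lt_pow_left₀ n hb.le hpow⟩

theorem sq_mul_lt_neg_sq_mul_sq_iff {K : Type*} [Field K] [LinearOrder K] [IsStrictOrderedRing K]
    {a b c : K} (ha : a ≠ 0) : a ^ 2 * c < (-a ^ 2 * b) ^ 2 ↔ c / a ^ 2 < b ^ 2 := by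
  have ha2 : 0 < a ^ 2 := by positivity
  calc a ^ 2 * c < (-a ^ 2 * b) ^ 2
      ↔ a ^ 2 * c < a ^ 2 * (b ^ 2 * a ^ 2) := by ring_nf
    _ ↔ c < b ^ 2 * a ^ 2 := mul_lt_mul_iff_right₀ ha2
    _ ↔ c / a ^ 2 < b ^ 2 := (div_lt_iff₀ ha2).symm

theorem deriv_comp_one_div_eq_neg_sq_sqrt {p : ℝ → ℝ} {ρ pd : ℝ} (hρ : ρ ≠ 0)
    (hp : HasDerivAt p pd ρ) (hpd : 0 ≤ pd) :
    deriv (fun w => p (1 / w)) (1 / ρ) = -√(-deriv (fun w => p (1 / w)) (1 / ρ)) ^ 2 := by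
  have hneg_deriv : -deriv (fun w => p (1 / w)) (1 / ρ) = ρ ^ 2 * pd := by
    rw [(hasDerivAt_comp_one_div hρ hp).deriv, smul_eq_mul, neg_mul, neg_neg]
  rw [Real.sq_sqrt (hneg_deriv ▸ by positivity), neg_neg]

theorem pw_jamiton_existence_iff_instability_general {U p : ℝ → ℝ} {ρ Ud pd m : ℝ}
    (hρ : ρ ≠ 0) (hU : HasDerivAt U Ud ρ) (hp : HasDerivAt p pd ρ) (hm : 0 ≤ m)
    (hsonic : deriv (fun w => p (1 / w)) (1 / ρ) = -m ^ 2) :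
    m < deriv (fun w => U (1 / w)) (1 / ρ) ↔ Ud < 0 ∧ pd / ρ ^ 2 < Ud ^ 2 := by
  have hm_sq : m ^ 2 = ρ ^ 2 * pd := by
    rwa [(hasDerivAt_comp_one_div hρ hp).deriv, smul_eq_mul, neg_mul, neg_inj, eq_comm] at hsonic
  have hU_pos : 0 < -ρ ^ 2 * Ud ↔ Ud < 0 := by
    rw [neg_mul_comm, mul_pos_iff_of_pos_left (sq_pos_of_ne_zero hρ), neg_pos]
  rw [(hasDerivAt_comp_one_div hρ hU).deriv, smul_eq_mul,
    lt_iff_pos_and_pow_lt_pow hm two_ne_zero, hU_pos, hm_sq, sq_mul_lt_neg_sq_mul_sq_iff hρ]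

/-- Payne–Whitham model in Lagrangian variables: for `ρ > 0`, `v = 1/ρ`,
`Û(w) = U(1/w)`, `p̂(w) = p(1/w)` and `m = √(−p̂'(v))`, the jamiton-existence
condition `Û'(v) > m` holds iff the stability condition fails strictly at `ρ`,
i.e. iff `p'(ρ)/ρ² < (U'(ρ))²`. -/
theorem pw_jamiton_existence_iff_instability (U p : ℝ → ℝ) (ρ Ud pd : ℝ)
    (hρ : 0 < ρ)
    (hU : HasDerivAt U Ud ρ) (hUd : Ud < 0)
    (hp : HasDerivAt p pd ρ) (hpd : 0 < pd) :
    (deriv (fun w => U (1 / w)) (1 / ρ) >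
        Real.sqrt (-(deriv (fun w => p (1 / w)) (1 / ρ)))) ↔
      pd / ρ ^ 2 < Ud ^ 2 := by
  simpa only [hUd, true_and] using pw_jamiton_existence_iff_instability_general hρ.ne' hU hp
    (Real.sqrt_nonneg _) (deriv_comp_one_div_eq_neg_sq_sqrt hρ.ne' hp hpd.le)
end

section
/- Let I ⊆ (0,∞) be an open interval, let p̂ : I → ℝ be twice differentiable with p̂'(v) < 0 and p̂''(v) > 0 for all v ∈ I, and let Û : I → ℝ be differentiable. Define m(v) = √(−p̂'(v)) and s(v) = Û(v) − m(v)·v. Then for every v ∈ I with Û'(v) > m(v), the function s is differentiable at v with s'(v) > 0. Consequently, for the Payne–Whitham model, along the family of jamitons parameterized by the sonic specific volume v_S, the Eulerian jamiton propagation speed s strictly increases with v_S, i.e., strictly decreases with the sonic density ρ_S = 1/v_S. -/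
/-!
Differentiating `m² = -p̂'` gives `m' = -p̂'' / (2m)`, so the product rule yields
`s' = (Û' - m) + p̂'' v / (2m)`: the jamiton condition makes the first term positive, and the
convexity of `p̂` makes the second one nonnegative.
-/

/-- The Lagrangian speed `m(v) = √(-p̂'(v))` of a Payne–Whitham jamiton with sonic specific
volume `v`, meaningful where `p̂' ≤ 0`; elsewhere `Real.sqrt` makes it `0`. -/
noncomputable def pwLagrangianSpeed (phat : ℝ → ℝ) (v : ℝ) : ℝ :=
  √(-(deriv phat v))

/-- The Eulerian propagation speed `s(v) = Û(v) - m(v) v` of a Payne–Whitham jamiton with sonic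
specific volume `v`. -/
noncomputable def pwEulerianSpeed (phat Uhat : ℝ → ℝ) (v : ℝ) : ℝ :=
  Uhat v - pwLagrangianSpeed phat v * v

section

variable {phat Uhat : ℝ → ℝ} {v p'' U' : ℝ}

theorem pwLagrangianSpeed_nonneg : 0 ≤ pwLagrangianSpeed phat v :=
  Real.sqrt_nonneg _

theorem hasDerivAt_pwLagrangianSpeed (hp' : deriv phat v < 0)
    (hp'' : HasDerivAt (deriv phat) p'' v) :
    HasDerivAt (pwLagrangianSpeed phat) (-p'' / (2 * pwLagrangianSpeed phat v)) v :=
  hp''.fun_neg.sqrt (neg_pos.mpr hp').ne'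

theorem hasDerivAt_pwEulerianSpeed (hp' : deriv phat v < 0)
    (hp'' : HasDerivAt (deriv phat) p'' v) (hU' : HasDerivAt Uhat U' v) :
    HasDerivAt (pwEulerianSpeed phat Uhat)
      (U' - pwLagrangianSpeed phat v + p'' * v / (2 * pwLagrangianSpeed phat v)) v := by
  have hs := hU'.fun_sub ((hasDerivAt_pwLagrangianSpeed hp' hp'').fun_mul (hasDerivAt_id' v))
  exact hs.congr_deriv (by ring)

theorem pw_jamiton_speed_monotone_general (hv : 0 ≤ v) (hp' : deriv phat v < 0)
    (hd2 : DifferentiableAt ℝ (deriv phat) v) (hp'' : 0 ≤ deriv (deriv phat) v)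
    (hUd : DifferentiableAt ℝ Uhat v) (hU : pwLagrangianSpeed phat v < deriv Uhat v) :
    DifferentiableAt ℝ (pwEulerianSpeed phat Uhat) v ∧
      0 < deriv (pwEulerianSpeed phat Uhat) v := by
  have hs := hasDerivAt_pwEulerianSpeed hp' hd2.hasDerivAt hUd.hasDerivAt
  refine ⟨hs.differentiableAt, ?_⟩
  rw [hs.deriv]
  exact add_pos_of_pos_of_nonneg (sub_pos.mpr hU)
    (div_nonneg (mul_nonneg hp'' hv) (mul_nonneg zero_le_two pwLagrangianSpeed_nonneg))

end

/-- Payne–Whitham model: on an open interval `I ⊆ (0,∞)`, with `p̂` twice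
differentiable satisfying `p̂' < 0`, `p̂'' > 0` on `I` and `Û` differentiable,
define `m(v) = √(−p̂'(v))` and `s(v) = Û(v) − m(v)·v`. Then wherever the
jamiton-existence condition `Û'(v) > m(v)` holds, `s` is differentiable with
`s'(v) > 0`: the jamiton propagation speed strictly increases with the sonic
specific volume (i.e. strictly decreases with the sonic density). -/
theorem pw_jamiton_speed_monotone (I : Set ℝ) (hIo : IsOpen I)
    (hIc : Convex ℝ I) (hIsub : I ⊆ Set.Ioi (0 : ℝ))
    (phat Uhat : ℝ → ℝ)
    (hd1 : ∀ v ∈ I, DifferentiableAt ℝ phat v)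
    (hd2 : ∀ v ∈ I, DifferentiableAt ℝ (deriv phat) v)
    (hp' : ∀ v ∈ I, deriv phat v < 0)
    (hp'' : ∀ v ∈ I, 0 < deriv (deriv phat) v)
    (hUd : ∀ v ∈ I, DifferentiableAt ℝ Uhat v) :
    ∀ v ∈ I, deriv Uhat v > Real.sqrt (-(deriv phat v)) →
      DifferentiableAt ℝ (fun x => Uhat x - Real.sqrt (-(deriv phat x)) * x) v ∧
      0 < deriv (fun x => Uhat x - Real.sqrt (-(deriv phat x)) * x) v := by
  intro v hv hU
  exact pw_jamiton_speed_monotone_general (hIsub hv).le (hp' v hv) (hd2 v hv) (hp'' v hv).le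
    (hUd v hv) hU
end

section
/- Let I ⊆ (0,∞) be an open interval, let ĥ : I → ℝ be twice differentiable with ĥ'(v) < 0 and ĥ''(v) > 0 for all v ∈ I, and let Û : I → ℝ be differentiable. Define m(v) = −ĥ'(v) and s(v) = Û(v) − m(v)·v. Then for every v ∈ I with Û'(v) > m(v), the function s is differentiable at v with s'(v) > 0. Consequently, for the Aw–Rascle–Zhang model, along the family of jamitons parameterized by the sonic specific volume v_S, the Eulerian jamiton propagation speed s strictly increases with v_S, i.e., strictly decreases with the sonic density ρ_S = 1/v_S. -/
/-- The Eulerian propagation speed `s = Û(v) - m(v) v` of a jamiton, as a function of its sonic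
specific volume `v`. The Lagrangian speed `m`, which is `-ĥ'` in the Aw–Rascle–Zhang model,
may be any function of `v` here. -/
def jamitonSpeed (m Uhat : ℝ → ℝ) (v : ℝ) : ℝ :=
  Uhat v - m v * v

theorem hasDerivAt_jamitonSpeed {m Uhat : ℝ → ℝ} {m' U' v : ℝ}
    (hm : HasDerivAt m m' v) (hU : HasDerivAt Uhat U' v) :
    HasDerivAt (jamitonSpeed m Uhat) ((U' - m v) - m' * v) v := by
  have hmv : HasDerivAt (fun x => m x * x) (m' * v + m v * 1) v := hm.mul (hasDerivAt_id v)
  exact (hU.sub hmv).congr_deriv (by ring)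

theorem arz_jamiton_speed_monotone_general {m Uhat : ℝ → ℝ} {m' U' v : ℝ}
    (hm : HasDerivAt m m' v) (hU : HasDerivAt Uhat U' v)
    (hv : 0 ≤ v) (hm' : m' ≤ 0) (hmU : m v < U') :
    DifferentiableAt ℝ (jamitonSpeed m Uhat) v ∧ 0 < deriv (jamitonSpeed m Uhat) v := by
  have hs := hasDerivAt_jamitonSpeed hm hU
  refine ⟨hs.differentiableAt, ?_⟩
  calc
    0 < U' - m v := sub_pos.2 hmU
    _ ≤ (U' - m v) - m' * v := (le_sub_self_iff _).2 (mul_nonpos_of_nonpos_of_nonneg hm' hv)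
    _ = deriv (jamitonSpeed m Uhat) v := hs.deriv.symm

/-- Aw–Rascle–Zhang model: on an open interval `I ⊆ (0,∞)`, with `ĥ` twice
differentiable satisfying `ĥ' < 0`, `ĥ'' > 0` on `I` and `Û` differentiable,
define `m(v) = −ĥ'(v)` and `s(v) = Û(v) − m(v)·v`. Then wherever the
jamiton-existence condition `Û'(v) > m(v)` holds, `s` is differentiable with
`s'(v) > 0`: the jamiton propagation speed strictly increases with the sonic
specific volume (i.e. strictly decreases with the sonic density). -/
theorem arz_jamiton_speed_monotone (I : Set ℝ) (hIo : IsOpen I)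
    (hIc : Convex ℝ I) (hIsub : I ⊆ Set.Ioi (0 : ℝ))
    (hhat Uhat : ℝ → ℝ)
    (hd1 : ∀ v ∈ I, DifferentiableAt ℝ hhat v)
    (hd2 : ∀ v ∈ I, DifferentiableAt ℝ (deriv hhat) v)
    (hh' : ∀ v ∈ I, deriv hhat v < 0)
    (hh'' : ∀ v ∈ I, 0 < deriv (deriv hhat) v)
    (hUd : ∀ v ∈ I, DifferentiableAt ℝ Uhat v) :
    ∀ v ∈ I, deriv Uhat v > -(deriv hhat v) →
      DifferentiableAt ℝ (fun x => Uhat x - (-(deriv hhat x)) * x) v ∧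
      0 < deriv (fun x => Uhat x - (-(deriv hhat x)) * x) v := by
  intro v hv hmU
  exact arz_jamiton_speed_monotone_general (hd2 v hv).hasDerivAt.neg (hUd v hv).hasDerivAt
    (hIsub hv).le (neg_nonpos.2 (hh'' v hv).le) hmU
end

section
/- Let I ⊆ ℝ be an open interval and v⁺ < v_S < v⁻ points of I. Let r : I → ℝ be continuously differentiable with r'(v_S) = 0, r'(v) < 0 for v ∈ [v⁺, v_S), and r'(v) > 0 for v ∈ (v_S, v⁻]. Let w : I → ℝ be differentiable and strictly concave with w(v_S) = 0, w'(v_S) > 0, and w(v) > 0 for v ∈ (v_S, v⁻]. Define f : [v⁺, v⁻] → ℝ by f(v) = (v − v_S)·r'(v)/w(v) for v ≠ v_S and f(v_S) = 0. Then f is continuous on [v⁺, v⁻], nonnegative is not claimed pointwise, but its integral satisfies ∫_{v⁺}^{v⁻} f(v) dv ≥ 0; equivalently, ∫_{v⁺}^{v⁻} v·r'(v)/w(v) dv ≥ v_S · ∫_{v⁺}^{v⁻} r'(v)/w(v) dv, i.e., the mean specific volume L/N of the jamiton is at least the sonic specific volume v_S. Consequently the average density of the jamiton is at most the sonic density, so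 the effective flow rate of a periodic chain of identical jamitons is lower than the flow rate of the uniform base state with the same average density. -/
/-!
Concavity makes the slope `σ v = w v / (v - v_S)` antitone, and its value at `v⁻` is positive, so
`1 / σ` is monotone, positive and bounded. As `r'` vanishes at `v_S`, the product `f = r' / σ` is
continuous there even if `1 / σ` jumps. If `k` lies between the values of `1 / σ` to the left and to
the right of `v_S`, then `r' * (1 / σ - k) ≥ 0` because both factors change sign at `v_S`, whence
`∫ f ≥ k * ∫ r' = k * (r v⁻ - r v⁺) = 0`. The last inequality follows by integrating
`v * r' / w = f + v_S * (r' / w)`.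
-/

open Set Filter Topology MeasureTheory

section Slope

variable {𝕜 : Type*} [Field 𝕜] {s : Set 𝕜} {w : 𝕜 → 𝕜} {b c : 𝕜}

theorem inv_slope_of_eq_zero (hwc : w c = 0) (v : 𝕜) : (slope w c v)⁻¹ = (v - c) / w v := by
  rw [slope_def_field, hwc, sub_zero, inv_div]

theorem ite_eq_mul_inv_slope [DecidableEq 𝕜] {φ : 𝕜 → 𝕜} (hφc : φ c = 0) (hwc : w c = 0) (v : 𝕜) :
    (if v = c then 0 else (v - c) * φ v / w v) = φ v * (slope w c v)⁻¹ := by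
  split_ifs with hv
  · rw [hv, hφc, zero_mul]
  · rw [inv_slope_of_eq_zero hwc, mul_comm, mul_div_assoc]

variable [LinearOrder 𝕜] [IsStrictOrderedRing 𝕜]

theorem slope_pos_of_concaveOn (hw : ConcaveOn 𝕜 s w) (hc : c ∈ s) (hb : IsGreatest s b)
    (hcb : w c < w b) {v : 𝕜} (hv : v ∈ s \ {c}) : 0 < slope w c v := by
  have hbc : b ≠ c := fun h => hcb.ne (congrArg w h.symm)
  calc
    0 < slope w c b := (slope_pos_iff_of_le (hb.2 hc)).2 hcb
    _ ≤ slope w c v := hw.slope_anti hc hv ⟨hb.1, hbc⟩ (hb.2 hv.1)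

theorem monotoneOn_inv_slope_of_concaveOn (hw : ConcaveOn 𝕜 s w) (hc : c ∈ s)
    (hb : IsGreatest s b) (hcb : w c < w b) : MonotoneOn (fun v => (slope w c v)⁻¹) (s \ {c}) :=
  fun _ hu _ hv huv =>
    inv_anti₀ (slope_pos_of_concaveOn hw hc hb hcb hv) (hw.slope_anti hc hu hv huv)

end Slope

section Continuity

theorem continuousOn_mul_of_eq_zero_of_norm_le {X R : Type*} [TopologicalSpace X] [T1Space X]
    [SeminormedRing R] {φ g : X → R} {s : Set X} {c : X} {M : ℝ} (hφ : ContinuousOn φ s)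
    (hφc : φ c = 0) (hg : ContinuousOn g (s \ {c})) (hgM : ∀ v ∈ s \ {c}, ‖g v‖ ≤ M) :
    ContinuousOn (fun v => φ v * g v) s := by
  intro v hv
  obtain rfl | hvc := eq_or_ne v c
  · refine continuousWithinAt_sdiff_self.1 ?_
    have hφ0 : Tendsto φ (𝓝[s \ {v}] v) (𝓝 0) := hφc ▸ (hφ v hv).mono sdiff_subset
    have hgb : IsBoundedUnder (· ≤ ·) (𝓝[s \ {v}] v) (norm ∘ g) :=
      isBoundedUnder_of_eventually_le (eventually_mem_nhdsWithin.mono hgM)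
    simpa only [ContinuousWithinAt, hφc, zero_mul] using hφ0.zero_mul_isBoundedUnder_le hgb
  · have hs : s \ {c} ∈ 𝓝[s] v :=
      inter_mem_nhdsWithin s (isOpen_compl_singleton.mem_nhds hvc)
    exact (hφ v hv).mul ((hg v ⟨hv, hvc⟩).mono_of_mem_nhdsWithin hs)

theorem continuousOn_mul_inv_slope_of_concaveOn {s : Set ℝ} {φ w : ℝ → ℝ} {b c : ℝ}
    (hφ : ContinuousOn φ s) (hφc : φ c = 0) (hw : ConcaveOn ℝ s w) (hwcont : ContinuousOn w s)
    (hc : c ∈ s) (hb : IsGreatest s b) (hcb : w c < w b) :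
    ContinuousOn (fun v => φ v * (slope w c v)⁻¹) s := by
  have hpos : ∀ v ∈ s \ {c}, 0 < slope w c v := fun _ => slope_pos_of_concaveOn hw hc hb hcb
  have hslope : ContinuousOn (slope w c) (s \ {c}) := fun v hv =>
    ((continuousAt_id.sub continuousAt_const).inv₀ (sub_ne_zero.2 hv.2)).continuousWithinAt.smul
      (((hwcont v hv.1).mono sdiff_subset).sub continuousWithinAt_const)
  refine continuousOn_mul_of_eq_zero_of_norm_le (M := (slope w c b)⁻¹) hφ hφc
    (hslope.inv₀ fun v hv => (hpos v hv).ne') fun v hv => ?_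
  have hbc : b ≠ c := fun h => hcb.ne (congrArg w h.symm)
  rw [Real.norm_of_nonneg (inv_nonneg.2 (hpos v hv).le)]
  exact monotoneOn_inv_slope_of_concaveOn hw hc hb hcb hv ⟨hb.1, hbc⟩ (hb.2 hv.1)

end Continuity

section Integral

variable {μ : Measure ℝ} {a b c : ℝ}

theorem exists_nonneg_mul_le_mul_of_monotoneOn {φ g : ℝ → ℝ} (hac : a < c) (hcb : c < b)
    (hφc : φ c = 0) (hneg : ∀ v ∈ Ico a c, φ v ≤ 0) (hpos : ∀ v ∈ Ioc c b, 0 ≤ φ v)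
    (hg : MonotoneOn g (Icc a b \ {c})) (hga : 0 ≤ g a) :
    ∃ k, 0 ≤ k ∧ ∀ v ∈ Icc a b, k * φ v ≤ φ v * g v := by
  have hleft : Ico a c ⊆ Icc a b \ {c} := fun _ hv => ⟨⟨hv.1, (hv.2.trans hcb).le⟩, hv.2.ne⟩
  have hright : Ioc c b ⊆ Icc a b \ {c} := fun _ hv => ⟨⟨(hac.trans hv.1).le, hv.2⟩, hv.1.ne'⟩
  obtain ⟨k, hk_left, hk_right⟩ := exists_between_of_forall_le
    ((nonempty_Ico.2 hac).image g) ((nonempty_Ioc.2 hcb).image g) <| by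
      rintro _ ⟨u, hu, rfl⟩ _ ⟨v, hv, rfl⟩
      exact hg (hleft hu) (hright hv) (hu.2.trans hv.1).le
  refine ⟨k, hga.trans (hk_left (mem_image_of_mem g (left_mem_Ico.2 hac))), fun v hv => ?_⟩
  rw [mul_comm]
  obtain hvc | rfl | hcv := lt_trichotomy v c
  · exact mul_le_mul_of_nonpos_left (hk_left (mem_image_of_mem g ⟨hv.1, hvc⟩))
      (hneg v ⟨hv.1, hvc⟩)
  · rw [hφc, zero_mul, zero_mul]
  · exact mul_le_mul_of_nonneg_left (hk_right (mem_image_of_mem g ⟨hcv, hv.2⟩))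
      (hpos v ⟨hcv, hv.2⟩)

theorem integral_mul_nonneg_of_monotoneOn {φ g : ℝ → ℝ} (hac : a < c) (hcb : c < b)
    (hφc : φ c = 0) (hneg : ∀ v ∈ Ico a c, φ v ≤ 0) (hpos : ∀ v ∈ Ioc c b, 0 ≤ φ v)
    (hg : MonotoneOn g (Icc a b \ {c})) (hga : 0 ≤ g a)
    (hφ : IntervalIntegrable φ μ a b) (hφg : IntervalIntegrable (fun v => φ v * g v) μ a b)
    (hint : 0 ≤ ∫ v in a..b, φ v ∂μ) : 0 ≤ ∫ v in a..b, φ v * g v ∂μ := by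
  obtain ⟨k, hk, hle⟩ := exists_nonneg_mul_le_mul_of_monotoneOn hac hcb hφc hneg hpos hg hga
  calc
    0 ≤ k * ∫ v in a..b, φ v ∂μ := mul_nonneg hk hint
    _ = ∫ v in a..b, k * φ v ∂μ := (intervalIntegral.integral_const_mul k φ).symm
    _ ≤ ∫ v in a..b, φ v * g v ∂μ :=
      intervalIntegral.integral_mono_on (hac.trans hcb).le (hφ.const_mul k) hφg hle

/-- If `G` is not integrable, both sides are the default value `0` unless `c = 0`. -/
theorem const_mul_integral_le_integral_add_const_mul {F G : ℝ → ℝ}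
    (hF : IntervalIntegrable F μ a b) (hF0 : 0 ≤ ∫ v in a..b, F v ∂μ) :
    c * ∫ v in a..b, G v ∂μ ≤ ∫ v in a..b, F v + c * G v ∂μ := by
  obtain rfl | hc := eq_or_ne c 0
  · simpa only [zero_mul, add_zero] using hF0
  by_cases hG : IntervalIntegrable G μ a b
  · rw [intervalIntegral.integral_add hF (hG.const_mul c), intervalIntegral.integral_const_mul]
    exact le_add_of_nonneg_left hF0
  · have hFG : ¬IntervalIntegrable (fun v => F v + c * G v) μ a b := fun h => hG <| by
      simpa only [Pi.sub_apply, add_sub_cancel_left, inv_mul_cancel_left₀ hc] using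
        (h.sub hF).const_mul c⁻¹
    rw [intervalIntegral.integral_undef hG, intervalIntegral.integral_undef hFG, mul_zero]

end Integral

theorem effective_flow_rate_general {vp vS vm : ℝ} (hpS : vp < vS) (hSm : vS < vm)
    {r r' w : ℝ → ℝ} (hr : ContinuousOn r (Icc vp vm))
    (hr' : ∀ v ∈ Ioo vp vm, HasDerivAt r (r' v) v) (hr'cont : ContinuousOn r' (Icc vp vm))
    (hr'S : r' vS = 0) (hneg : ∀ v ∈ Ico vp vS, r' v ≤ 0) (hpos : ∀ v ∈ Ioc vS vm, 0 ≤ r' v)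
    (hshock : r vp ≤ r vm) (hw : ConcaveOn ℝ (Icc vp vm) w) (hwcont : ContinuousOn w (Icc vp vm))
    (hwS : w vS = 0) (hwm : 0 < w vm) :
    ContinuousOn (fun v => if v = vS then 0 else (v - vS) * r' v / w v) (Icc vp vm) ∧
    0 ≤ (∫ v in vp..vm, if v = vS then 0 else (v - vS) * r' v / w v) ∧
    vS * (∫ v in vp..vm, r' v / w v) ≤ ∫ v in vp..vm, v * r' v / w v := by
  have hle : vp ≤ vm := (hpS.trans hSm).le
  have hS : vS ∈ Icc vp vm := ⟨hpS.le, hSm.le⟩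
  have hwSm : w vS < w vm := hwS ▸ hwm
  have hcont := continuousOn_mul_inv_slope_of_concaveOn hr'cont hr'S hw hwcont hS
    (isGreatest_Icc hle) hwSm
  have hslope_pos : 0 < slope w vS vp :=
    slope_pos_of_concaveOn hw hS (isGreatest_Icc hle) hwSm ⟨left_mem_Icc.2 hle, hpS.ne⟩
  have hr'int : IntervalIntegrable r' volume vp vm := hr'cont.intervalIntegrable_of_Icc hle
  have hint : 0 ≤ ∫ v in vp..vm, r' v := by
    rw [intervalIntegral.integral_eq_sub_of_hasDerivAt_of_le hle hr hr' hr'int]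
    exact sub_nonneg.2 hshock
  have hnonneg := integral_mul_nonneg_of_monotoneOn hpS hSm hr'S hneg hpos
    (monotoneOn_inv_slope_of_concaveOn hw hS (isGreatest_Icc hle) hwSm)
    (inv_nonneg.2 hslope_pos.le) hr'int (hcont.intervalIntegrable_of_Icc hle) hint
  have hsplit : ∀ v, v * r' v / w v = r' v * (slope w vS v)⁻¹ + vS * (r' v / w v) := fun v => by
    rw [inv_slope_of_eq_zero hwS]
    ring
  simp only [ite_eq_mul_inv_slope hr'S hwS, hsplit]
  exact ⟨hcont, hnonneg,
    const_mul_integral_le_integral_add_const_mul (hcont.intervalIntegrable_of_Icc hle) hnonneg⟩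

/-- Effective flow rate theorem: for a jamiton connecting `v⁺ < v_S < v⁻`
(with the shock condition `r(v⁺) = r(v⁻)`), the function
`f(v) = (v − v_S)·r'(v)/w(v)` (with `f(v_S) = 0`) is continuous on
`[v⁺, v⁻]` and has nonnegative integral; equivalently
`∫ v·r'/w ≥ v_S·∫ r'/w`, i.e. the mean specific volume `L/N` of the jamiton is
at least the sonic specific volume `v_S`, so the average density is at most the
sonic density and the effective flow rate of a periodic chain of identical
jamitons is lower than that of the uniform base state of the same average
density. -/
theorem effective_flow_rate (I : Set ℝ) (hIo : IsOpen I) (hIc : Convex ℝ I)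
    (vp vS vm : ℝ) (hvp : vp ∈ I) (hvS : vS ∈ I) (hvm : vm ∈ I)
    (h1 : vp < vS) (h2 : vS < vm)
    (r w : ℝ → ℝ)
    (hrd : ∀ v ∈ I, DifferentiableAt ℝ r v)
    (hrc : ContinuousOn (deriv r) I)
    (hrS : deriv r vS = 0)
    (hrneg : ∀ v ∈ Set.Ico vp vS, deriv r v < 0)
    (hrpos : ∀ v ∈ Set.Ioc vS vm, 0 < deriv r v)
    (hshock : r vp = r vm)
    (hwd : ∀ v ∈ I, DifferentiableAt ℝ w v)
    (hwconc : StrictConcaveOn ℝ I w)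
    (hwS : w vS = 0) (hwS' : 0 < deriv w vS)
    (hwpos : ∀ v ∈ Set.Ioc vS vm, 0 < w v) :
    ContinuousOn (fun v => if v = vS then 0 else (v - vS) * deriv r v / w v)
      (Set.Icc vp vm) ∧
    0 ≤ (∫ v in vp..vm, if v = vS then 0 else (v - vS) * deriv r v / w v) ∧
    vS * (∫ v in vp..vm, deriv r v / w v) ≤ ∫ v in vp..vm, v * deriv r v / w v := by
  have hsub : Icc vp vm ⊆ I := hIc.ordConnected.out hvp hvm
  exact effective_flow_rate_general h1 h2
    (fun v hv => (hrd v (hsub hv)).continuousAt.continuousWithinAt)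
    (fun v hv => (hrd v (hsub (Ioo_subset_Icc_self hv))).hasDerivAt) (hrc.mono hsub) hrS
    (fun v hv => (hrneg v hv).le) (fun v hv => (hrpos v hv).le) hshock.le
    (hwconc.concaveOn.subset hsub (convex_Icc vp vm))
    (fun v hv => (hwd v (hsub hv)).continuousAt.continuousWithinAt) hwS
    (hwpos vm (right_mem_Ioc.2 h2))
end
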